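/- Fix an integer r ≥ 2 and ε, D > 0. Then there exists N₀ such that for all N ≥ N₀, all integers d with 1 ≤ d ≤ N/2 and dN even, and every index i ∈ {1,…,N}, the uniform random d-regular graph satisfies ℙ( ∑_{j=1}^N |(𝒜^r)_{ij} − d^r N^{−1}| ≥ N^ε d^{r−1} √N ) ≤ N^{−D}. -/

import Mathlib

open MeasureTheory Filter Matrix
open scoped ENNReal NNReal

noncomputable section

/-- `A` is the adjacency matrix of a `d`-regular graph on `N` vertices:
a symmetric `{0,1}`-matrix with zero diagonal and all row sums equal to `d`. -/
def IsAdjMat (N d : ℕ) (A : Matrix (Fin N) (Fin N) ℝ) : Prop :=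
  A.IsSymm ∧ (∀ i, A i i = 0) ∧ (∀ i j, A i j = 0 ∨ A i j = 1) ∧ ∀ i, ∑ j, A i j = d

/-- probability of an event under the uniform measure on `d`-regular graphs on `N` vertices. -/
def PrReg (N d : ℕ) (E : Matrix (Fin N) (Fin N) ℝ → Prop) : ℝ :=
  (Nat.card {A : Matrix (Fin N) (Fin N) ℝ // IsAdjMat N d A ∧ E A} : ℝ) /
    (Nat.card {A : Matrix (Fin N) (Fin N) ℝ // IsAdjMat N d A} : ℝ)

/-- expectation of `F` under the uniform measure on `d`-regular graphs on `N` vertices. -/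
def Ereg (N d : ℕ) (F : Matrix (Fin N) (Fin N) ℝ → ℝ) : ℝ :=
  (∑ᶠ A : {A : Matrix (Fin N) (Fin N) ℝ // IsAdjMat N d A}, F A.1) /
    (Nat.card {A : Matrix (Fin N) (Fin N) ℝ // IsAdjMat N d A} : ℝ)

/-- the `k`-th largest eigenvalue (`1`-based indexing) of a symmetric matrix. -/
def eigval {N : ℕ} (A : Matrix (Fin N) (Fin N) ℝ) (k : ℕ) : ℝ :=
  if hA : A.IsHermitian then
    if h : k - 1 < N then
      hA.eigenvalues (Tuple.sort hA.eigenvalues (Fin.rev ⟨k - 1, h⟩))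
    else 0
  else 0

/-- `q = √(d(N-d)/N)`. -/
def qval (N d : ℕ) : ℝ := Real.sqrt ((d : ℝ) * ((N : ℝ) - (d : ℝ)) / (N : ℝ))

/-- the projection `P⊥ = I - e eᵀ` (complex version). -/
def Pperp (N : ℕ) : Matrix (Fin N) (Fin N) ℂ := 1 - Matrix.of fun _ _ => (N : ℂ)⁻¹

/-- the projection `P⊥ = I - e eᵀ` (real version). -/
def PperpR (N : ℕ) : Matrix (Fin N) (Fin N) ℝ := 1 - Matrix.of fun _ _ => (N : ℝ)⁻¹

/-- the Green function `G(z) = P⊥ (q⁻¹𝒜 - z)⁻¹ P⊥`. -/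
def greenM (N d : ℕ) (A : Matrix (Fin N) (Fin N) ℝ) (z : ℂ) : Matrix (Fin N) (Fin N) ℂ :=
  Pperp N * (((qval N d : ℝ) : ℂ)⁻¹ • A.map Complex.ofReal - z • 1)⁻¹ * Pperp N

/-- the normalized trace `Ḡ(z) = N⁻¹ Tr G(z)`. -/
def gbar (N d : ℕ) (A : Matrix (Fin N) (Fin N) ℝ) (z : ℂ) : ℂ :=
  (N : ℂ)⁻¹ * (greenM N d A z).trace

/-- the Stieltjes transform of the semicircle density `ϱ(x) = (2π)⁻¹ √((4-x²)₊)`. -/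
def mSC (z : ℂ) : ℂ :=
  ∫ x in (-2 : ℝ)..2, ((Real.sqrt (4 - x ^ 2) / (2 * Real.pi) : ℝ) : ℂ) / ((x : ℂ) - z)

/-- `(Δ_{ij})_{xy} = δ_{ix}δ_{jy} + δ_{iy}δ_{jx}`. -/
def Dmat (N : ℕ) (i j : Fin N) : Matrix (Fin N) (Fin N) ℝ :=
  Matrix.of fun x y =>
    (if i = x ∧ j = y then (1 : ℝ) else 0) + (if i = y ∧ j = x then (1 : ℝ) else 0)

/-- `ξ_{ij}^{kl} = Δ_{ij} + Δ_{kl} - Δ_{ik} - Δ_{jl}`. -/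
def xiMat (N : ℕ) (i j k l : Fin N) : Matrix (Fin N) (Fin N) ℝ :=
  Dmat N i j + Dmat N k l - Dmat N i k - Dmat N j l

/-- `χ_{ij}^{kl}(𝒜) = 𝒜_{ij}(1-𝒜_{ik})𝒜_{kl}(1-𝒜_{jl})`. -/
def chi (N : ℕ) (A : Matrix (Fin N) (Fin N) ℝ) (i j k l : Fin N) : ℝ :=
  A i j * (1 - A i k) * A k l * (1 - A j l)

/-- `𝓜_{ij}(F(𝒜)) = max_{k,l} |F(𝒜 + ξ_{ij}^{kl})|`. -/
def Mmax (N : ℕ) (i j : Fin N) (F : Matrix (Fin N) (Fin N) ℝ → ℝ)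
    (A : Matrix (Fin N) (Fin N) ℝ) : ℝ :=
  ⨆ p : Fin N × Fin N, |F (A + xiMat N i j p.1 p.2)|

instance matMS (N : ℕ) : MeasurableSpace (Matrix (Fin N) (Fin N) ℝ) :=
  show MeasurableSpace (Fin N → Fin N → ℝ) from inferInstance

/-- the GOE: push-forward of independent centered Gaussians with variance `(1+δ_{ij})/N`
on the upper triangle under the symmetrization map. -/
def goeMeasure (N : ℕ) : Measure (Matrix (Fin N) (Fin N) ℝ) :=
  Measure.map (fun f => Matrix.of fun i j => if i ≤ j then f (i, j) else f (j, i))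
    (Measure.pi fun p : Fin N × Fin N =>
      ProbabilityTheory.gaussianReal 0 (if p.1 = p.2 then 2 / N else 1 / N))

/-- the uniform probability measure on `d`-regular graphs on `N` vertices, as a measure. -/
def uniformReg (N d : ℕ) : Measure (Matrix (Fin N) (Fin N) ℝ) :=
  (Nat.card {A : Matrix (Fin N) (Fin N) ℝ // IsAdjMat N d A} : ℝ≥0∞)⁻¹ •
    Measure.sum fun A : {A : Matrix (Fin N) (Fin N) ℝ // IsAdjMat N d A} =>
      Measure.dirac A.1

/-- the matrix flow `A(t) = e^{-t/2} q⁻¹𝒜 + √(1-e^{-t}) W`, where `W = P⊥ H P⊥`. -/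
def flowMat (N d : ℕ) (A H : Matrix (Fin N) (Fin N) ℝ) (t : ℝ) : Matrix (Fin N) (Fin N) ℝ :=
  Real.exp (-t / 2) • ((qval N d)⁻¹ • A) +
    Real.sqrt (1 - Real.exp (-t)) • (PperpR N * H * PperpR N)

/-- the Green function of the matrix flow, `G(t;z) = P⊥ (A(t) - z)⁻¹ P⊥`. -/
def greenFlow (N d : ℕ) (A H : Matrix (Fin N) (Fin N) ℝ) (t : ℝ) (z : ℂ) :
    Matrix (Fin N) (Fin N) ℂ :=
  Pperp N * ((flowMat N d A H t).map Complex.ofReal - z • 1)⁻¹ * Pperp N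

/-- the normalized trace of the Green function of the flow. -/
def gbarFlow (N d : ℕ) (A H : Matrix (Fin N) (Fin N) ℝ) (t : ℝ) (z : ℂ) : ℂ :=
  (N : ℂ)⁻¹ * (greenFlow N d A H t z).trace

/-! Let `v` be the `i`-th row of `A ^ 2`, centred. A switching replaces edges `ik`, `lm` by `il`,
`km`; it preserves the uniform measure, is undone by the switching with `k` and `l` exchanged, and
decreases `v` by `A (e_k - e_l)` up to a bounded error. The sum of `⟪v, A (e_k - e_l)⟫` over all
admissible switchings is at least `d N ‖v‖ ^ 2 / 4` up to lower order terms, so switchings drive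
`v` towards `0`. On the other hand, in the expectation of `‖v‖ ^ n ⟪v, A (e_k - e_l)⟫` each
switching may be averaged with its inverse; since a single switching moves `v` by only `O(√d)` and
there are at most `N d ^ 2` of them, this expectation is `O(N d ^ 3 𝔼 ‖v‖ ^ n)` up to lower order
terms. Comparing the two bounds gives `𝔼 ‖v‖ ^ (n + 2) ≤ C (n + 1) d ^ 2 𝔼 ‖v‖ ^ n`, so every
moment of `‖v‖ / d` is bounded uniformly in `N` and `d`, and Markov's inequality bounds the tail of
`‖v‖`. Finally, Cauchy-Schwarz bounds the `ℓ¹` norm of `v` by `√N ‖v‖`, and each further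
multiplication by `A` increases the `ℓ¹` norm at most `d`-fold. -/

open scoped RealInnerProductSpace

theorem abs_pow_sub_pow_mul_le {a b : ℝ} (ha : 0 ≤ a) (hb : 0 ≤ b) (n : ℕ) :
    |a ^ n - b ^ n| * b ≤ n * (a ^ n + b ^ n) * |a - b| := by
  rcases n with _ | n
  · simp
  have hmax : max a b ^ (n + 1) ≤ a ^ (n + 1) + b ^ (n + 1) := by
    rcases max_choice a b with h | h <;> rw [h] <;> simp only [le_add_iff_nonneg_right,
      le_add_iff_nonneg_left] <;> positivity
  calc |a ^ (n + 1) - b ^ (n + 1)| * b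
      ≤ (|a - b| * ↑(n + 1) * max a b ^ n) * max a b := by
        gcongr
        · simpa only [abs_of_nonneg ha, abs_of_nonneg hb, add_tsub_cancel_right] using
            abs_pow_sub_pow_le a b (n + 1)
        · exact le_max_right a b
    _ = ↑(n + 1) * max a b ^ (n + 1) * |a - b| := by ring
    _ ≤ ↑(n + 1) * (a ^ (n + 1) + b ^ (n + 1)) * |a - b| := by gcongr

theorem norm_norm_pow_smul_sub_le {E : Type*} [SeminormedAddCommGroup E] [NormedSpace ℝ E]
    (v w : E) (n : ℕ) :
    ‖‖v‖ ^ n • v - ‖w‖ ^ n • w‖ ≤ (n + 1) * (‖v‖ ^ n + ‖w‖ ^ n) * ‖v - w‖ := by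
  have split : ‖v‖ ^ n • v - ‖w‖ ^ n • w = ‖v‖ ^ n • (v - w) + (‖v‖ ^ n - ‖w‖ ^ n) • w := by module
  calc ‖‖v‖ ^ n • v - ‖w‖ ^ n • w‖
      ≤ ‖v‖ ^ n * ‖v - w‖ + |‖v‖ ^ n - ‖w‖ ^ n| * ‖w‖ := by
        rw [split]
        refine (norm_add_le _ _).trans_eq ?_
        simp [norm_smul]
    _ ≤ (‖v‖ ^ n + ‖w‖ ^ n) * ‖v - w‖ + n * (‖v‖ ^ n + ‖w‖ ^ n) * ‖v - w‖ := by
        refine add_le_add ?_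
          ((abs_pow_sub_pow_mul_le (norm_nonneg v) (norm_nonneg w) n).trans ?_) <;> gcongr
        · exact le_add_of_nonneg_right (by positivity)
        · exact abs_norm_sub_norm_le v w
    _ = (n + 1) * (‖v‖ ^ n + ‖w‖ ^ n) * ‖v - w‖ := by ring

theorem norm_pow_mul_inner_sub_le {E : Type*} [SeminormedAddCommGroup E] [InnerProductSpace ℝ E]
    (v v' z z' : E) (n : ℕ) :
    ‖v‖ ^ n * ⟪v, z⟫ - ‖v'‖ ^ n * ⟪v', z'⟫ ≤
      (n + 1) * (‖v‖ ^ n + ‖v'‖ ^ n) * ‖v - v'‖ * ‖z‖ + ‖v'‖ ^ (n + 1) * ‖z - z'‖ :=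
  calc ‖v‖ ^ n * ⟪v, z⟫ - ‖v'‖ ^ n * ⟪v', z'⟫
      = ⟪‖v‖ ^ n • v - ‖v'‖ ^ n • v', z⟫ + ‖v'‖ ^ n * ⟪v', z - z'⟫ := by
        simp only [inner_sub_left, inner_sub_right, real_inner_smul_left]
        ring
    _ ≤ ‖‖v‖ ^ n • v - ‖v'‖ ^ n • v'‖ * ‖z‖ + ‖v'‖ ^ n * (‖v'‖ * ‖z - z'‖) := by
        gcongr <;> exact real_inner_le_norm _ _
    _ ≤ (n + 1) * (‖v‖ ^ n + ‖v'‖ ^ n) * ‖v - v'‖ * ‖z‖ + ‖v'‖ ^ n * (‖v'‖ * ‖z - z'‖) := by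
        gcongr
        exact norm_norm_pow_smul_sub_le v v' n
    _ = _ := by ring

theorem norm_single_sub_single_le {ι : Type*} [Fintype ι] [DecidableEq ι] (k l : ι) :
    ‖EuclideanSpace.single k (1 : ℝ) - EuclideanSpace.single l 1‖ ≤ 2 :=
  (norm_sub_le _ _).trans_eq (by rw [PiLp.norm_single, PiLp.norm_single]; norm_num)

theorem sum_abs_le_sqrt_card_mul_norm {ι : Type*} [Fintype ι] (x : EuclideanSpace ℝ ι) :
    ∑ j, |x j| ≤ √(Fintype.card ι) * ‖x‖ := by
  rw [EuclideanSpace.norm_eq, ← Real.sqrt_mul (Nat.cast_nonneg _)]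
  exact Real.le_sqrt_of_sq_le (sq_sum_le_card_mul_sum_sq (s := Finset.univ))

theorem sum_sum_eq_zero_of_antisymm {ι : Type*} [Fintype ι] {f : ι → ι → ℝ}
    (hf : ∀ k l, f l k = -f k l) : ∑ k, ∑ l, f k l = 0 := by
  have hneg : ∑ k, ∑ l, f k l = -∑ k, ∑ l, f k l := by
    calc ∑ k, ∑ l, f k l
        = ∑ k, ∑ l, f l k := Finset.sum_comm
      _ = ∑ k, ∑ l, -f k l := Finset.sum_congr rfl fun k _ ↦ Finset.sum_congr rfl fun l _ ↦ hf k l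
      _ = -∑ k, ∑ l, f k l := by simp only [Finset.sum_neg_distrib]
  linarith

/-! ### Adjacency matrices of regular graphs -/

namespace IsAdjMat

variable {N d : ℕ} {A : Matrix (Fin N) (Fin N) ℝ}

theorem apply_comm (h : IsAdjMat N d A) (x y : Fin N) : A x y = A y x := h.1.apply y x

theorem apply_nonneg (h : IsAdjMat N d A) (x y : Fin N) : 0 ≤ A x y := by
  rcases h.2.2.1 x y with e | e <;> simp [e]

theorem apply_le_one (h : IsAdjMat N d A) (x y : Fin N) : A x y ≤ 1 := by
  rcases h.2.2.1 x y with e | e <;> simp [e]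

theorem sum_apply_left (h : IsAdjMat N d A) (y : Fin N) : ∑ x, A x y = d := by
  simp only [h.apply_comm _ y, h.2.2.2]

theorem sum_mulVec (h : IsAdjMat N d A) (y : Fin N → ℝ) : ∑ x, (A *ᵥ y) x = d * ∑ x, y x := by
  simp only [mulVec, dotProduct]
  rw [Finset.sum_comm]
  simp only [← Finset.sum_mul, h.sum_apply_left, ← Finset.mul_sum]

theorem isSymmetric_toEuclideanLin (h : IsAdjMat N d A) : (toEuclideanLin A).IsSymmetric :=
  isSymmetric_toEuclideanLin_iff.2 (by simpa [IsHermitian, conjTranspose_eq_transpose_of_trivial]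
    using h.1.eq)

theorem sum_abs_pow_succ_sub_le (h : IsAdjMat N d A) (i : Fin N) (n : ℕ) :
    ∑ j, |(A ^ (n + 1)) i j - (d : ℝ) ^ (n + 1) / N| ≤
      d * ∑ j, |(A ^ n) i j - (d : ℝ) ^ n / N| := by
  have hrow (j : Fin N) : (A ^ (n + 1)) i j - (d : ℝ) ^ (n + 1) / N =
      ∑ x, ((A ^ n) i x - (d : ℝ) ^ n / N) * A x j := by
    simp only [pow_succ A, Matrix.mul_apply, sub_mul, Finset.sum_sub_distrib, ← Finset.mul_sum,
      h.sum_apply_left]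
    ring
  calc ∑ j, |(A ^ (n + 1)) i j - (d : ℝ) ^ (n + 1) / N|
      ≤ ∑ j, ∑ x, |(A ^ n) i x - (d : ℝ) ^ n / N| * A x j := by
        refine Finset.sum_le_sum fun j _ ↦ ?_
        rw [hrow]
        refine (Finset.abs_sum_le_sum_abs _ _).trans_eq ?_
        simp only [abs_mul, abs_of_nonneg (h.apply_nonneg _ j)]
    _ = d * ∑ x, |(A ^ n) i x - (d : ℝ) ^ n / N| := by
        rw [Finset.sum_comm, Finset.mul_sum]
        exact Finset.sum_congr rfl fun x _ ↦ by rw [← Finset.mul_sum, h.2.2.2, mul_comm]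

end IsAdjMat

/-- The adjacency matrix `J - 1 - A` of the complement of the graph with adjacency matrix `A`, where
`J` is the all-ones matrix; it expresses non-adjacency constraints as polynomials in `A`. -/
def complAdj {N : ℕ} (A : Matrix (Fin N) (Fin N) ℝ) : Matrix (Fin N) (Fin N) ℝ :=
  Matrix.of (fun _ _ ↦ 1) - 1 - A

namespace IsAdjMat

variable {N d : ℕ} {A : Matrix (Fin N) (Fin N) ℝ}

theorem complAdj_apply (h : IsAdjMat N d A) (x y : Fin N) :
    complAdj A x y = if A x y = 0 ∧ x ≠ y then 1 else 0 := by
  rcases eq_or_ne x y with rfl | hxy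
  · simp [complAdj, h.2.1]
  · rcases h.2.2.1 x y with e | e <;> simp [complAdj, e, hxy]

theorem complAdj_mem_Icc (h : IsAdjMat N d A) (x y : Fin N) :
    complAdj A x y ∈ Set.Icc (0 : ℝ) 1 := by
  rw [h.complAdj_apply]
  split_ifs <;> simp

theorem complAdj_mul_self (h : IsAdjMat N d A) :
    complAdj A * A = Matrix.of (fun _ _ ↦ (d : ℝ)) - A - A ^ 2 := by
  have hJ : Matrix.of (fun _ _ ↦ (1 : ℝ)) * A = Matrix.of fun _ _ ↦ (d : ℝ) := by
    ext x y
    simp [Matrix.mul_apply, h.sum_apply_left]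
  rw [complAdj, sub_mul, sub_mul, hJ, one_mul, sq]

theorem mul_complAdj_mul_self (h : IsAdjMat N d A) :
    A * (complAdj A * A) = Matrix.of (fun _ _ ↦ (d : ℝ) ^ 2) - A ^ 2 - A ^ 3 := by
  have hJ : A * Matrix.of (fun _ _ ↦ (d : ℝ)) = Matrix.of fun _ _ ↦ (d : ℝ) ^ 2 := by
    ext x y
    simp [Matrix.mul_apply, ← Finset.sum_mul, h.2.2.2, sq]
  rw [h.complAdj_mul_self, mul_sub, mul_sub, hJ, ← sq, ← pow_succ']

theorem complAdj_mul_self_apply_comm (h : IsAdjMat N d A) (k l : Fin N) :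
    (complAdj A * A) k l = (complAdj A * A) l k := by
  simp [h.complAdj_mul_self, h.apply_comm k l, (h.1.pow 2).apply k l]

theorem complAdj_mul_self_apply_mem_Icc (h : IsAdjMat N d A) (k l : Fin N) :
    (complAdj A * A) k l ∈ Set.Icc (0 : ℝ) d := by
  rw [Matrix.mul_apply]
  refine ⟨Finset.sum_nonneg fun m _ ↦ mul_nonneg (h.complAdj_mem_Icc k m).1 (h.apply_nonneg m l),
    ?_⟩
  rw [← h.sum_apply_left l]
  exact Finset.sum_le_sum fun m _ ↦
    mul_le_of_le_one_left (h.apply_nonneg m l) (h.complAdj_mem_Icc k m).2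

theorem sum_complAdj_mul_self_apply (h : IsAdjMat N d A) (k : Fin N) :
    ∑ l, (complAdj A * A) k l = d * (N - 1 - d) := by
  simp only [Matrix.mul_apply]
  rw [Finset.sum_comm]
  simp only [← Finset.mul_sum, h.2.2.2, ← Finset.sum_mul]
  simp [complAdj, Matrix.one_apply, h.2.2.2, mul_comm]

end IsAdjMat

/-! ### Admissible switchings -/

/-- The edges `ik`, `lm` of the graph `A` can be replaced by the edges `il`, `km` in a switching
rooted at `i`. Distinctness of the remaining pairs of vertices follows from the adjacencies. -/
structure CanSwitch {N : ℕ} (A : Matrix (Fin N) (Fin N) ℝ) (i k l m : Fin N) : Prop where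
  adj_ik : A i k = 1
  adj_lm : A l m = 1
  not_adj_il : A i l = 0
  not_adj_km : A k m = 0
  ne_il : i ≠ l
  ne_km : k ≠ m

open Classical in
/-- The triples `(k, l, m)` along which `A` can be switched at the root `i`. -/
def switchings {N : ℕ} (A : Matrix (Fin N) (Fin N) ℝ) (i : Fin N) :
    Finset (Fin N × Fin N × Fin N) :=
  {s | CanSwitch A i s.1 s.2.1 s.2.2}

theorem mem_switchings {N : ℕ} {A : Matrix (Fin N) (Fin N) ℝ} {i : Fin N}
    {s : Fin N × Fin N × Fin N} : s ∈ switchings A i ↔ CanSwitch A i s.1 s.2.1 s.2.2 := by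
  simp [switchings]

namespace IsAdjMat

variable {N d : ℕ} {A : Matrix (Fin N) (Fin N) ℝ}

open Classical in
theorem ite_canSwitch (h : IsAdjMat N d A) (i k l m : Fin N) :
    (if CanSwitch A i k l m then 1 else 0 : ℝ) =
      A i k * complAdj A i l * (complAdj A k m * A m l) := by
  have hiff : CanSwitch A i k l m ↔
      A i k = 1 ∧ A l m = 1 ∧ (A i l = 0 ∧ i ≠ l) ∧ (A k m = 0 ∧ k ≠ m) :=
    ⟨fun ⟨h1, h2, h3, h4, h5, h6⟩ ↦ ⟨h1, h2, ⟨h3, h5⟩, h4, h6⟩,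
      fun ⟨h1, h2, ⟨h3, h5⟩, h4, h6⟩ ↦ ⟨h1, h2, h3, h4, h5, h6⟩⟩
  rw [h.apply_comm m l, h.complAdj_apply, h.complAdj_apply]
  rcases h.2.2.1 i k with hik | hik <;> rcases h.2.2.1 l m with hlm | hlm <;>
    simp [hiff, hik, hlm, ← ite_and, and_comm]

theorem sum_switchings (h : IsAdjMat N d A) (i : Fin N) (f : Fin N → Fin N → ℝ) :
    ∑ s ∈ switchings A i, f s.1 s.2.1 =
      ∑ k, ∑ l, A i k * complAdj A i l * (complAdj A * A) k l * f k l := by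
  classical
  simp only [switchings, Finset.sum_filter, Fintype.sum_prod_type, Matrix.mul_apply,
    Finset.mul_sum, Finset.sum_mul]
  refine Finset.sum_congr rfl fun k _ ↦ Finset.sum_congr rfl fun l _ ↦
    Finset.sum_congr rfl fun m _ ↦ ?_
  rw [← h.ite_canSwitch, ite_mul, one_mul, zero_mul]

theorem card_switchings_le (h : IsAdjMat N d A) (i : Fin N) :
    ((switchings A i).card : ℝ) ≤ N * d ^ 2 := by
  calc ((switchings A i).card : ℝ)
      = ∑ k, ∑ l, A i k * complAdj A i l * (complAdj A * A) k l := by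
        simpa using h.sum_switchings i fun _ _ ↦ 1
    _ ≤ ∑ k, ∑ _l : Fin N, A i k * d := by
        refine Finset.sum_le_sum fun k _ ↦ Finset.sum_le_sum fun l _ ↦ ?_
        refine mul_le_mul ?_ (h.complAdj_mul_self_apply_mem_Icc k l).2
          (h.complAdj_mul_self_apply_mem_Icc k l).1 (h.apply_nonneg i k)
        exact mul_le_of_le_one_right (h.apply_nonneg i k) (h.complAdj_mem_Icc i l).2
    _ = N * d ^ 2 := by
        simp only [Finset.sum_const, Finset.card_univ, Fintype.card_fin, nsmul_eq_mul,
          ← Finset.mul_sum, ← Finset.sum_mul, h.2.2.2]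
        ring

/-- In the weight `1 - δ_il - A_il` of the constraint on `l`, the contribution of `A_il` cancels by
antisymmetry in `k` and `l`, and that of `δ_il` is the last sum. -/
theorem sum_switchings_sub (h : IsAdjMat N d A) (i : Fin N) (y : Fin N → ℝ) :
    ∑ s ∈ switchings A i, (y s.1 - y s.2.1) =
      d * (N - 1 - d) * (A *ᵥ y) i - d ^ 2 * ∑ l, y l + (A ^ 2 *ᵥ y) i + (A ^ 3 *ᵥ y) i -
        ∑ k, A i k * (complAdj A * A) k i * (y k - y i) := by
  rw [h.sum_switchings i fun k l ↦ y k - y l]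
  set T : Matrix (Fin N) (Fin N) ℝ := complAdj A * A with hT
  have T_comm (k l : Fin N) : T k l = T l k := h.complAdj_mul_self_apply_comm k l
  have antisymm : ∑ k, ∑ l, A i k * A i l * T k l * (y k - y l) = 0 :=
    sum_sum_eq_zero_of_antisymm fun k l ↦ by rw [T_comm l k]; ring
  have outgoing : ∑ k, ∑ l, A i k * T k l * y k = d * (N - 1 - d) * (A *ᵥ y) i := by
    simp only [← Finset.sum_mul, ← Finset.mul_sum, hT, h.sum_complAdj_mul_self_apply, mulVec,
      dotProduct]
    rw [Finset.mul_sum]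
    exact Finset.sum_congr rfl fun k _ ↦ by ring
  have incoming : ∑ k, ∑ l, A i k * T k l * y l =
      d ^ 2 * ∑ l, y l - (A ^ 2 *ᵥ y) i - (A ^ 3 *ᵥ y) i := by
    rw [Finset.sum_comm]
    simp only [← Finset.sum_mul, ← Matrix.mul_apply, hT, h.mul_complAdj_mul_self]
    simp [mulVec, dotProduct, sub_mul, Finset.mul_sum]
  have diagonal : ∑ k, ∑ l, A i k * (1 : Matrix (Fin N) (Fin N) ℝ) i l * T k l * (y k - y l) =
      ∑ k, A i k * T k i * (y k - y i) := by
    simp [Matrix.one_apply]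
  have split (k l : Fin N) : A i k * complAdj A i l * T k l * (y k - y l) =
      A i k * T k l * y k - A i k * T k l * y l -
        A i k * (1 : Matrix (Fin N) (Fin N) ℝ) i l * T k l * (y k - y l) -
        A i k * A i l * T k l * (y k - y l) := by
    simp only [complAdj, Matrix.sub_apply, Matrix.of_apply]
    ring
  simp only [split, Finset.sum_sub_distrib, antisymm, outgoing, incoming, diagonal]
  ring

end IsAdjMat

/-! ### The drift of the centred row -/

/-- The `i`-th row of `A ^ 2`, centred so that its entries sum to zero for a `d`-regular graph: the
vector whose moments the switching argument controls. -/
def centeredRow {N : ℕ} (d : ℕ) (A : Matrix (Fin N) (Fin N) ℝ) (i : Fin N) :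
    EuclideanSpace ℝ (Fin N) :=
  WithLp.toLp 2 fun j ↦ (A ^ 2) i j - (d : ℝ) ^ 2 / N

/-- The difference of the columns `k` and `l` of `A`: to leading order, the amount by which a
switching replacing the edge `ik` by `il` decreases the `i`-th row of `A ^ 2`. -/
def switchDir {N : ℕ} (A : Matrix (Fin N) (Fin N) ℝ) (k l : Fin N) : EuclideanSpace ℝ (Fin N) :=
  toEuclideanLin A (EuclideanSpace.single k 1 - EuclideanSpace.single l 1)

theorem switchDir_swap {N : ℕ} (A : Matrix (Fin N) (Fin N) ℝ) (k l : Fin N) :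
    switchDir A l k = -switchDir A k l := by
  rw [switchDir, switchDir, ← map_neg, neg_sub]

theorem inner_centeredRow_eq_sq_mulVec {N : ℕ} (d : ℕ) (A : Matrix (Fin N) (Fin N) ℝ) (i : Fin N)
    {y : EuclideanSpace ℝ (Fin N)} (hy : ∑ j, y j = 0) :
    ⟪centeredRow d A i, y⟫ = (A ^ 2 *ᵥ y) i := by
  simp [centeredRow, EuclideanSpace.inner_eq_star_dotProduct, mulVec, dotProduct, sub_mul,
    ← Finset.mul_sum, hy, mul_comm (y _)]

namespace IsAdjMat

variable {N d : ℕ} {A : Matrix (Fin N) (Fin N) ℝ}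

theorem sum_centeredRow (h : IsAdjMat N d A) (i : Fin N) : ∑ j, centeredRow d A i j = 0 := by
  have hN : (N : ℝ) ≠ 0 := mod_cast i.pos.ne'
  simp only [centeredRow, sq, Matrix.mul_apply, Finset.sum_sub_distrib]
  rw [Finset.sum_comm]
  simp only [← Finset.mul_sum, h.2.2.2, ← Finset.sum_mul, Finset.sum_const, Finset.card_univ,
    Fintype.card_fin, nsmul_eq_mul]
  field_simp
  ring

theorem centeredRow_eq (h : IsAdjMat N d A) (i : Fin N) :
    centeredRow d A i = toEuclideanLin A (toEuclideanLin A (EuclideanSpace.single i 1)) -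
      WithLp.toLp 2 fun _ ↦ (d : ℝ) ^ 2 / N := by
  ext j
  simp [centeredRow, sq, Matrix.mul_apply, mulVec, dotProduct, h.apply_comm _ i, h.apply_comm _ j,
    mul_comm]

theorem inner_switchDir (h : IsAdjMat N d A) (v : EuclideanSpace ℝ (Fin N)) (k l : Fin N) :
    ⟪v, switchDir A k l⟫ = (A *ᵥ v) k - (A *ᵥ v) l := by
  rw [switchDir, ← h.isSymmetric_toEuclideanLin, inner_sub_right]
  simp [EuclideanSpace.inner_single_right]

theorem norm_switchDir_le (h : IsAdjMat N d A) (k l : Fin N) : ‖switchDir A k l‖ ≤ √(2 * d) := by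
  refine Real.le_sqrt_of_sq_le ?_
  rw [EuclideanSpace.real_norm_sq_eq]
  calc ∑ x, switchDir A k l x ^ 2
      ≤ ∑ x, (A x k + A x l) := by
        refine Finset.sum_le_sum fun x _ ↦ ?_
        rcases h.2.2.1 x k with hk | hk <;> rcases h.2.2.1 x l with hl | hl <;>
          simp [switchDir, hk, hl]
    _ = 2 * d := by rw [Finset.sum_add_distrib, h.sum_apply_left, h.sum_apply_left]; ring

theorem sum_abs_pow_add_two_sub_le (h : IsAdjMat N d A) (i : Fin N) (n : ℕ) :
    ∑ j, |(A ^ (n + 2)) i j - (d : ℝ) ^ (n + 2) / N| ≤ d ^ n * (√N * ‖centeredRow d A i‖) := by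
  induction n with
  | zero => simpa [centeredRow] using sum_abs_le_sqrt_card_mul_norm (centeredRow d A i)
  | succ n ih =>
    calc ∑ j, |(A ^ (n + 3)) i j - (d : ℝ) ^ (n + 3) / N|
        ≤ d * ∑ j, |(A ^ (n + 2)) i j - (d : ℝ) ^ (n + 2) / N| := h.sum_abs_pow_succ_sub_le i _
      _ ≤ d * (d ^ n * (√N * ‖centeredRow d A i‖)) := by gcongr
      _ = d ^ (n + 1) * (√N * ‖centeredRow d A i‖) := by ring

theorem sum_mul_inner_switchDir_le (h : IsAdjMat N d A) (hd : 2 * d ≤ N) (i : Fin N)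
    (v : EuclideanSpace ℝ (Fin N)) :
    ∑ k, A i k * (complAdj A * A) k i * ⟪v, switchDir A k i⟫ ≤ d ^ 2 * N * ‖v‖ := by
  have hdir (k : Fin N) : ‖switchDir A k i‖ ≤ N := by
    refine (h.norm_switchDir_le k i).trans (Real.sqrt_le_iff.2 ⟨N.cast_nonneg, ?_⟩)
    exact_mod_cast hd.trans (Nat.le_pow two_pos)
  calc ∑ k, A i k * (complAdj A * A) k i * ⟪v, switchDir A k i⟫
      ≤ ∑ k, A i k * d * (‖v‖ * N) := by
        refine Finset.sum_le_sum fun k _ ↦ ?_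
        obtain ⟨hT0, hTd⟩ := h.complAdj_mul_self_apply_mem_Icc k i
        have hik := h.apply_nonneg i k
        refine (mul_le_mul_of_nonneg_left (real_inner_le_norm _ _) (by positivity)).trans ?_
        gcongr
        exact hdir k
    _ = d ^ 2 * N * ‖v‖ := by
        rw [← Finset.sum_mul, ← Finset.sum_mul, h.2.2.2]
        ring

theorem sum_switchings_inner_switchDir (h : IsAdjMat N d A) (i : Fin N) :
    ∑ s ∈ switchings A i, ⟪centeredRow d A i, switchDir A s.1 s.2.1⟫ =
      d * (N - 1 - d) * ‖centeredRow d A i‖ ^ 2 +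
        ⟪centeredRow d A i, toEuclideanLin A (centeredRow d A i)⟫ +
        ‖toEuclideanLin A (centeredRow d A i)‖ ^ 2 -
        ∑ k, A i k * (complAdj A * A) k i * ⟪centeredRow d A i, switchDir A k i⟫ := by
  set v := centeredRow d A i
  set L := toEuclideanLin A
  have sum_v : ∑ j, v j = 0 := h.sum_centeredRow i
  have sum_Lv : ∑ j, L v j = 0 := (h.sum_mulVec v).trans (by rw [sum_v, mul_zero])
  have sum_LLv : ∑ j, L (L v) j = 0 := (h.sum_mulVec (L v)).trans (by rw [sum_Lv, mul_zero])
  have first : (A *ᵥ L v) i = ‖v‖ ^ 2 := by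
    rw [← real_inner_self_eq_norm_sq, inner_centeredRow_eq_sq_mulVec d A i sum_v, sq,
      ← mulVec_mulVec]
    rfl
  have second : (A ^ 2 *ᵥ L v) i = ⟪v, L v⟫ :=
    (inner_centeredRow_eq_sq_mulVec d A i sum_Lv).symm
  have third : (A ^ 3 *ᵥ L v) i = ‖L v‖ ^ 2 := by
    rw [← real_inner_self_eq_norm_sq, h.isSymmetric_toEuclideanLin,
      inner_centeredRow_eq_sq_mulVec d A i sum_LLv, pow_succ, ← mulVec_mulVec]
    rfl
  have drift := h.sum_switchings_sub i (L v)
  rw [sum_Lv, first, second, third] at drift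
  simp only [h.inner_switchDir]
  refine drift.trans ?_
  simp only [L, ofLp_toLpLin, toLin'_apply]
  ring

theorem le_sum_switchings_inner_switchDir (h : IsAdjMat N d A) (hd : 1 ≤ d) (hdN : 2 * d ≤ N)
    (hN : 5 ≤ N) (i : Fin N) :
    d * N / 4 * ‖centeredRow d A i‖ ^ 2 - d ^ 2 * N * ‖centeredRow d A i‖ ≤
      ∑ s ∈ switchings A i, ⟪centeredRow d A i, switchDir A s.1 s.2.1⟫ := by
  rw [h.sum_switchings_inner_switchDir]
  set v := centeredRow d A i
  set w := toEuclideanLin A v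
  have correction := h.sum_mul_inner_switchDir_le hdN i v
  have higher_order : -(1 / 4) * ‖v‖ ^ 2 ≤ ⟪v, w⟫ + ‖w‖ ^ 2 := by
    nlinarith [neg_abs_le ⟪v, w⟫, abs_real_inner_le_norm v w, sq_nonneg (‖v‖ / 2 - ‖w‖)]
  have coeff : (d : ℝ) * N / 4 ≤ d * (N - 1 - d) - 1 / 4 := by
    have hd' : (1 : ℝ) ≤ d := mod_cast hd
    have hdN' : (2 * d : ℝ) ≤ N := mod_cast hdN
    have hN' : (5 : ℝ) ≤ N := mod_cast hN
    nlinarith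
  have leading := mul_le_mul_of_nonneg_right coeff (sq_nonneg ‖v‖)
  linarith

end IsAdjMat

/-! ### The effect of a switching -/

section Dmat

variable {N : ℕ} {a b : Fin N}

theorem Dmat_apply_of_ne (hab : a ≠ b) (x y : Fin N) :
    Dmat N a b x y = if s(x, y) = s(a, b) then 1 else 0 := by
  simp only [Dmat, Matrix.of_apply, Sym2.eq_iff]
  split_ifs <;> grind

theorem Dmat_isSymm (a b : Fin N) : (Dmat N a b).IsSymm := by
  ext x y
  simp [Dmat, add_comm]

theorem sum_Dmat_apply (a b x : Fin N) :
    ∑ y, Dmat N a b x y = (if a = x then 1 else 0) + if b = x then 1 else 0 := by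
  simp [Dmat, Finset.sum_add_distrib, ite_and]

theorem toEuclideanLin_Dmat (a b : Fin N) (w : EuclideanSpace ℝ (Fin N)) :
    toEuclideanLin (Dmat N a b) w =
      w b • EuclideanSpace.single a 1 + w a • EuclideanSpace.single b 1 := by
  ext x
  simp [Dmat, mulVec, dotProduct, add_mul, Finset.sum_add_distrib, ite_and,
    eq_comm]

end Dmat

/-- The switched matrix, in which the edges `ik`, `lm` have been replaced by `il`, `km`. -/
def switch {N : ℕ} (A : Matrix (Fin N) (Fin N) ℝ) (i k l m : Fin N) : Matrix (Fin N) (Fin N) ℝ :=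
  A + xiMat N i l k m

theorem switch_switch {N : ℕ} (A : Matrix (Fin N) (Fin N) ℝ) (i k l m : Fin N) :
    switch (switch A i k l m) i l k m = A := by
  simp only [switch, xiMat]
  abel

theorem toEuclideanLin_switch {N : ℕ} (A : Matrix (Fin N) (Fin N) ℝ) (i k l m : Fin N)
    (w : EuclideanSpace ℝ (Fin N)) :
    toEuclideanLin (switch A i k l m) w = toEuclideanLin A w +
      (w l - w k) • (EuclideanSpace.single i 1 - EuclideanSpace.single m 1) +
      (w i - w m) • (EuclideanSpace.single l 1 - EuclideanSpace.single k 1) := by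
  simp only [switch, xiMat, map_add, map_sub, LinearMap.add_apply, LinearMap.sub_apply,
    toEuclideanLin_Dmat]
  module

namespace CanSwitch

variable {N d : ℕ} {A : Matrix (Fin N) (Fin N) ℝ} {i k l m : Fin N}

theorem ne_ik (hs : CanSwitch A i k l m) (h : IsAdjMat N d A) : i ≠ k := by
  rintro rfl
  simpa [h.2.1] using hs.adj_ik

theorem ne_lm (hs : CanSwitch A i k l m) (h : IsAdjMat N d A) : l ≠ m := by
  rintro rfl
  simpa [h.2.1] using hs.adj_lm

theorem ne_kl (hs : CanSwitch A i k l m) : k ≠ l := by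
  rintro rfl
  simpa [hs.not_adj_il] using hs.adj_ik

theorem ne_im (hs : CanSwitch A i k l m) (h : IsAdjMat N d A) : i ≠ m := by
  rintro rfl
  simpa [h.apply_comm i, hs.not_adj_km] using hs.adj_ik

theorem switch_apply (hs : CanSwitch A i k l m) (h : IsAdjMat N d A) (x y : Fin N) :
    switch A i k l m x y =
      if s(x, y) = s(i, l) ∨ s(x, y) = s(k, m) then 1
      else if s(x, y) = s(i, k) ∨ s(x, y) = s(l, m) then 0
      else A x y := by
  have ik := hs.ne_ik h
  have im := hs.ne_im h
  have A_eq {a b : Fin N} (hab : s(x, y) = s(a, b)) : A x y = A a b := by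
    rcases Sym2.eq_iff.1 hab with ⟨rfl, rfl⟩ | ⟨rfl, rfl⟩
    exacts [rfl, h.apply_comm _ _]
  simp only [switch, xiMat, Matrix.add_apply, Matrix.sub_apply, Dmat_apply_of_ne hs.ne_il,
    Dmat_apply_of_ne hs.ne_km, Dmat_apply_of_ne ik, Dmat_apply_of_ne (hs.ne_lm h)]
  by_cases h_il : s(x, y) = s(i, l)
  · simp [h_il, A_eq h_il, hs.not_adj_il, hs.ne_il, ik, im, hs.ne_kl.symm]
  by_cases h_km : s(x, y) = s(k, m)
  · simp [h_km, A_eq h_km, hs.not_adj_km, hs.ne_km, ik.symm, im.symm, hs.ne_kl]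
  by_cases h_ik : s(x, y) = s(i, k)
  · simp [h_ik, A_eq h_ik, hs.adj_ik, hs.ne_il, hs.ne_km, hs.ne_kl, im]
  by_cases h_lm : s(x, y) = s(l, m)
  · simp [h_lm, A_eq h_lm, hs.adj_lm, hs.ne_il.symm, hs.ne_km.symm, hs.ne_kl.symm, im.symm]
  simp [h_il, h_km, h_ik, h_lm]

theorem isAdjMat_switch (hs : CanSwitch A i k l m) (h : IsAdjMat N d A) :
    IsAdjMat N d (switch A i k l m) := by
  refine ⟨?_, fun x ↦ ?_, fun x y ↦ ?_, fun x ↦ ?_⟩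
  · exact h.1.add ((((Dmat_isSymm _ _).add (Dmat_isSymm _ _)).sub (Dmat_isSymm _ _)).sub
      (Dmat_isSymm _ _))
  · have hx {a b : Fin N} (hab : a ≠ b) : s(x, x) ≠ s(a, b) := by grind
    simp [hs.switch_apply h, hx hs.ne_il, hx hs.ne_km, h.2.1]
  · rw [hs.switch_apply h]
    split_ifs
    exacts [.inr rfl, .inl rfl, h.2.2.1 x y]
  · simp only [switch, xiMat, Matrix.add_apply, Matrix.sub_apply, Finset.sum_add_distrib,
      Finset.sum_sub_distrib, sum_Dmat_apply, h.2.2.2]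
    ring

theorem canSwitch_switch (hs : CanSwitch A i k l m) (h : IsAdjMat N d A) :
    CanSwitch (switch A i k l m) i l k m where
  adj_ik := by simp [hs.switch_apply h]
  adj_lm := by simp [hs.switch_apply h]
  not_adj_il := by simp [hs.switch_apply h, hs.ne_kl, hs.ne_il, hs.ne_ik h, hs.ne_im h]
  not_adj_km := by
    simp [hs.switch_apply h, hs.ne_kl.symm, hs.ne_il.symm, hs.ne_lm h, (hs.ne_im h).symm]
  ne_il := hs.ne_ik h
  ne_km := hs.ne_lm h

theorem switchDir_switch (hs : CanSwitch A i k l m) (h : IsAdjMat N d A) :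
    switchDir (switch A i k l m) k l = switchDir A k l -
      (2 : ℝ) • (EuclideanSpace.single i 1 - EuclideanSpace.single m 1) := by
  set w : EuclideanSpace ℝ (Fin N) := EuclideanSpace.single k 1 - EuclideanSpace.single l 1
  have w_lk : w l - w k = -2 := by
    norm_num [w, hs.ne_kl, hs.ne_kl.symm]
  have w_im : w i - w m = 0 := by
    simp [w, hs.ne_ik h, hs.ne_il, hs.ne_km.symm, (hs.ne_lm h).symm]
  rw [switchDir, toEuclideanLin_switch, w_lk, w_im, switchDir]
  module

theorem norm_switchDir_sub_le (hs : CanSwitch A i k l m) (h : IsAdjMat N d A) :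
    ‖switchDir A k l - switchDir (switch A i k l m) k l‖ ≤ 4 := by
  rw [hs.switchDir_switch h, sub_sub_cancel, norm_smul, Real.norm_ofNat]
  linarith [norm_single_sub_single_le i m]

theorem centeredRow_sub (hs : CanSwitch A i k l m) (h : IsAdjMat N d A) :
    centeredRow d A i - centeredRow d (switch A i k l m) i =
      switchDir (switch A i k l m) k l +
        (EuclideanSpace.single i 1 - EuclideanSpace.single m 1) -
        A i m • (EuclideanSpace.single k 1 - EuclideanSpace.single l 1) := by
  set L := toEuclideanLin A
  set L' := toEuclideanLin (switch A i k l m) with hL'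
  set e : EuclideanSpace ℝ (Fin N) := EuclideanSpace.single i 1
  have e_lk : e l - e k = 0 := by simp [e, (hs.ne_ik h).symm, hs.ne_il.symm]
  have e_im : e i - e m = 1 := by simp [e, (hs.ne_im h).symm]
  have Le_apply (x : Fin N) : L e x = A i x := by simp [L, e, h.apply_comm i]
  have row_change : L' e = L e - (EuclideanSpace.single k 1 - EuclideanSpace.single l 1) := by
    rw [hL', toEuclideanLin_switch, e_lk, e_im]
    module
  have second_change : L' (L e) = L (L e) - (e - EuclideanSpace.single m 1) +
      A i m • (EuclideanSpace.single k 1 - EuclideanSpace.single l 1) := by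
    rw [hL', toEuclideanLin_switch, Le_apply, Le_apply, Le_apply, Le_apply, hs.adj_ik,
      hs.not_adj_il, h.2.1]
    module
  rw [h.centeredRow_eq, (hs.isAdjMat_switch h).centeredRow_eq, row_change, map_sub, second_change,
    switchDir]
  abel

theorem norm_centeredRow_sub_le (hs : CanSwitch A i k l m) (h : IsAdjMat N d A) :
    ‖centeredRow d A i - centeredRow d (switch A i k l m) i‖ ≤ √(2 * d) + 4 := by
  have correction :
      ‖A i m • (EuclideanSpace.single k (1 : ℝ) - EuclideanSpace.single l 1)‖ ≤ 2 := by
    rw [norm_smul, Real.norm_of_nonneg (h.apply_nonneg i m)]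
    exact (mul_le_of_le_one_left (norm_nonneg _) (h.apply_le_one i m)).trans
      (norm_single_sub_single_le k l)
  rw [hs.centeredRow_sub h]
  refine (norm_sub_le _ _).trans ((add_le_add (norm_add_le _ _) correction).trans ?_)
  linarith [(hs.isAdjMat_switch h).norm_switchDir_le k l, norm_single_sub_single_le i m]

theorem norm_pow_mul_inner_add_le (hs : CanSwitch A i k l m) (h : IsAdjMat N d A) (hd : 1 ≤ d)
    (n : ℕ) :
    ‖centeredRow d A i‖ ^ n * ⟪centeredRow d A i, switchDir A k l⟫ +
        ‖centeredRow d (switch A i k l m) i‖ ^ n *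
          ⟪centeredRow d (switch A i k l m) i, switchDir (switch A i k l m) l k⟫ ≤
      10 * (n + 1) * d *
          (‖centeredRow d A i‖ ^ n + ‖centeredRow d (switch A i k l m) i‖ ^ n) +
        4 * ‖centeredRow d (switch A i k l m) i‖ ^ (n + 1) := by
  have product : (√(2 * d) + 4) * √(2 * d) ≤ 10 * d := by
    have hd' : (1 : ℝ) ≤ d := mod_cast hd
    have hsqrt : √(2 * d) ≤ 2 * d := Real.sqrt_le_iff.2 ⟨by positivity, by nlinarith⟩
    linarith [Real.mul_self_sqrt (by positivity : (0 : ℝ) ≤ 2 * d)]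
  set v := centeredRow d A i
  set v' := centeredRow d (switch A i k l m) i
  rw [switchDir_swap _ k l, inner_neg_right, mul_neg, ← sub_eq_add_neg]
  calc _ ≤ (n + 1) * (‖v‖ ^ n + ‖v'‖ ^ n) * ‖v - v'‖ * ‖switchDir A k l‖ +
          ‖v'‖ ^ (n + 1) * ‖switchDir A k l - switchDir (switch A i k l m) k l‖ :=
        norm_pow_mul_inner_sub_le v v' _ _ n
    _ ≤ (n + 1) * (‖v‖ ^ n + ‖v'‖ ^ n) * (√(2 * d) + 4) * √(2 * d) + ‖v'‖ ^ (n + 1) * 4 := by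
        gcongr
        exacts [hs.norm_centeredRow_sub_le h, h.norm_switchDir_le k l, hs.norm_switchDir_sub_le h]
    _ = (n + 1) * (‖v‖ ^ n + ‖v'‖ ^ n) * ((√(2 * d) + 4) * √(2 * d)) + 4 * ‖v'‖ ^ (n + 1) := by
        ring
    _ ≤ (n + 1) * (‖v‖ ^ n + ‖v'‖ ^ n) * (10 * d) + 4 * ‖v'‖ ^ (n + 1) := by gcongr
    _ = _ := by ring

end CanSwitch

/-! ### Moments and tails of the centred row -/

theorem finite_setOf_isAdjMat (N d : ℕ) :
    {A : Matrix (Fin N) (Fin N) ℝ | IsAdjMat N d A}.Finite := by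
  refine (Set.Finite.pi' fun _ ↦ Set.Finite.pi' fun _ ↦ Set.toFinite ({0, 1} : Set ℝ)).subset ?_
  exact fun A hA x y ↦ hA.2.2.1 x y

/-- The finite set of adjacency matrices of `d`-regular graphs on `N` vertices. -/
def regGraphs (N d : ℕ) : Finset (Matrix (Fin N) (Fin N) ℝ) :=
  (finite_setOf_isAdjMat N d).toFinset

section RegularGraphs

variable {N d : ℕ}

theorem mem_regGraphs {A : Matrix (Fin N) (Fin N) ℝ} : A ∈ regGraphs N d ↔ IsAdjMat N d A := by
  simp [regGraphs]

theorem card_isAdjMat (N d : ℕ) :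
    Nat.card {A : Matrix (Fin N) (Fin N) ℝ // IsAdjMat N d A} = (regGraphs N d).card :=
  Nat.subtype_card _ fun _ ↦ mem_regGraphs

theorem Ereg_eq_sum_div (F : Matrix (Fin N) (Fin N) ℝ → ℝ) :
    Ereg N d F = (∑ A ∈ regGraphs N d, F A) / (regGraphs N d).card := by
  rw [Ereg, card_isAdjMat, regGraphs, ← finsum_mem_eq_finite_toFinset_sum]
  exact congrArg (· / _) (finsum_set_coe_eq_finsum_mem {A | IsAdjMat N d A})

theorem PrReg_mul_le_Ereg {E : Matrix (Fin N) (Fin N) ℝ → Prop} {F : Matrix (Fin N) (Fin N) ℝ → ℝ}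
    {c : ℝ} (hF : ∀ A, IsAdjMat N d A → 0 ≤ F A) (hE : ∀ A, IsAdjMat N d A → E A → c ≤ F A) :
    PrReg N d E * c ≤ Ereg N d F := by
  classical
  have card_event : Nat.card {A : Matrix (Fin N) (Fin N) ℝ // IsAdjMat N d A ∧ E A} =
      ((regGraphs N d).filter E).card :=
    Nat.subtype_card _ fun A ↦ by rw [Finset.mem_filter, mem_regGraphs]
  rw [PrReg, Ereg_eq_sum_div, card_event, card_isAdjMat, div_mul_eq_mul_div]
  gcongr
  calc ((regGraphs N d).filter E).card * c
      = ∑ A ∈ regGraphs N d with E A, c := by rw [Finset.sum_const, nsmul_eq_mul]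
    _ ≤ ∑ A ∈ regGraphs N d with E A, F A := Finset.sum_le_sum fun A hA ↦ by
        rw [Finset.mem_filter, mem_regGraphs] at hA
        exact hE A hA.1 hA.2
    _ ≤ ∑ A ∈ regGraphs N d, F A := Finset.sum_le_sum_of_subset_of_nonneg
        (Finset.filter_subset _ _) fun A hA _ ↦ hF A (mem_regGraphs.1 hA)

theorem sum_sum_switchings_switch (i : Fin N)
    (F : Matrix (Fin N) (Fin N) ℝ → Fin N × Fin N × Fin N → ℝ) :
    ∑ A ∈ regGraphs N d, ∑ s ∈ switchings A i,
        F (switch A i s.1 s.2.1 s.2.2) (s.2.1, s.1, s.2.2) =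
      ∑ A ∈ regGraphs N d, ∑ s ∈ switchings A i, F A s := by
  rw [Finset.sum_sigma', Finset.sum_sigma']
  let τ (p : Σ _ : Matrix (Fin N) (Fin N) ℝ, Fin N × Fin N × Fin N) :
      Σ _ : Matrix (Fin N) (Fin N) ℝ, Fin N × Fin N × Fin N :=
    ⟨switch p.1 i p.2.1 p.2.2.1 p.2.2.2, (p.2.2.1, p.2.1, p.2.2.2)⟩
  have τ_mem : ∀ p ∈ (regGraphs N d).sigma (switchings · i),
      τ p ∈ (regGraphs N d).sigma (switchings · i) := by
    simp only [Finset.mem_sigma, mem_regGraphs, mem_switchings]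
    exact fun p ⟨h, hs⟩ ↦ ⟨hs.isAdjMat_switch h, hs.canSwitch_switch h⟩
  have τ_τ (p) : τ (τ p) = p := Sigma.ext (switch_switch _ _ _ _ _) HEq.rfl
  exact Finset.sum_nbij' τ τ τ_mem τ_mem (fun p _ ↦ τ_τ p) (fun p _ ↦ τ_τ p) fun _ _ ↦ rfl

theorem sum_sum_switchings_le (i : Fin N) {g : Matrix (Fin N) (Fin N) ℝ → ℝ} (hg : ∀ A, 0 ≤ g A) :
    ∑ A ∈ regGraphs N d, ∑ _s ∈ switchings A i, g A ≤ N * d ^ 2 * ∑ A ∈ regGraphs N d, g A := by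
  rw [Finset.mul_sum]
  refine Finset.sum_le_sum fun A hA ↦ ?_
  rw [Finset.sum_const, nsmul_eq_mul]
  exact mul_le_mul_of_nonneg_right ((mem_regGraphs.1 hA).card_switchings_le i) (hg A)

/-- Averaging each switching with its inverse makes the two inner products nearly cancel: for
`n = 0` their sum is `O(d + ‖v‖)`, whereas each of them may be as large as `√(2d) ‖v‖`. -/
theorem two_mul_sum_sum_switchings_inner_le (hd : 1 ≤ d) (i : Fin N) (n : ℕ) :
    2 * ∑ A ∈ regGraphs N d, ∑ s ∈ switchings A i,
        ‖centeredRow d A i‖ ^ n * ⟪centeredRow d A i, switchDir A s.1 s.2.1⟫ ≤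
      N * d ^ 2 * ∑ A ∈ regGraphs N d,
        (20 * (n + 1) * d * ‖centeredRow d A i‖ ^ n + 4 * ‖centeredRow d A i‖ ^ (n + 1)) := by
  let ρ (A : Matrix (Fin N) (Fin N) ℝ) : ℝ := ‖centeredRow d A i‖
  let φ (A : Matrix (Fin N) (Fin N) ℝ) (s : Fin N × Fin N × Fin N) : ℝ :=
    ρ A ^ n * ⟪centeredRow d A i, switchDir A s.1 s.2.1⟫
  have sum_ρ_switch (j : ℕ) :
      ∑ A ∈ regGraphs N d, ∑ s ∈ switchings A i, ρ (switch A i s.1 s.2.1 s.2.2) ^ j =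
        ∑ A ∈ regGraphs N d, ∑ _s ∈ switchings A i, ρ A ^ j :=
    sum_sum_switchings_switch i fun A _ ↦ ρ A ^ j
  calc 2 * ∑ A ∈ regGraphs N d, ∑ s ∈ switchings A i, φ A s
      = ∑ A ∈ regGraphs N d, ∑ s ∈ switchings A i,
          (φ A s + φ (switch A i s.1 s.2.1 s.2.2) (s.2.1, s.1, s.2.2)) := by
        simp only [Finset.sum_add_distrib, sum_sum_switchings_switch i φ, two_mul]
    _ ≤ ∑ A ∈ regGraphs N d, ∑ s ∈ switchings A i,
          (10 * (n + 1) * d * (ρ A ^ n + ρ (switch A i s.1 s.2.1 s.2.2) ^ n) +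
            4 * ρ (switch A i s.1 s.2.1 s.2.2) ^ (n + 1)) :=
        Finset.sum_le_sum fun A hA ↦ Finset.sum_le_sum fun s hs ↦
          (mem_switchings.1 hs).norm_pow_mul_inner_add_le (mem_regGraphs.1 hA) hd n
    _ = ∑ A ∈ regGraphs N d, ∑ _s ∈ switchings A i,
          (20 * (n + 1) * d * ρ A ^ n + 4 * ρ A ^ (n + 1)) := by
        simp only [Finset.sum_add_distrib, ← Finset.mul_sum, sum_ρ_switch]
        ring
    _ ≤ _ := sum_sum_switchings_le i fun A ↦ by positivity

theorem sum_norm_centeredRow_pow_add_two_le (hd : 1 ≤ d) (hdN : 2 * d ≤ N) (hN : 5 ≤ N)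
    (i : Fin N) (n : ℕ) :
    ∑ A ∈ regGraphs N d, ‖centeredRow d A i‖ ^ (n + 2) ≤
      224 * (n + 1) * d ^ 2 * ∑ A ∈ regGraphs N d, ‖centeredRow d A i‖ ^ n := by
  have lower : ∑ A ∈ regGraphs N d,
      (d * N / 4 * ‖centeredRow d A i‖ ^ (n + 2) - d ^ 2 * N * ‖centeredRow d A i‖ ^ (n + 1)) ≤
      ∑ A ∈ regGraphs N d, ∑ s ∈ switchings A i,
        ‖centeredRow d A i‖ ^ n * ⟪centeredRow d A i, switchDir A s.1 s.2.1⟫ := by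
    refine Finset.sum_le_sum fun A hA ↦ ?_
    rw [← Finset.mul_sum]
    refine le_of_eq_of_le ?_ (mul_le_mul_of_nonneg_left
      ((mem_regGraphs.1 hA).le_sum_switchings_inner_switchDir hd hdN hN i) (by positivity))
    ring
  have upper := two_mul_sum_sum_switchings_inner_le hd i n
  have interpolation : ∑ A ∈ regGraphs N d, 24 * d * ‖centeredRow d A i‖ ^ (n + 1) ≤
      ∑ A ∈ regGraphs N d,
        (‖centeredRow d A i‖ ^ (n + 2) + 144 * d ^ 2 * ‖centeredRow d A i‖ ^ n) := by
    refine Finset.sum_le_sum fun A _ ↦ ?_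
    linear_combination ‖centeredRow d A i‖ ^ n * sq_nonneg (‖centeredRow d A i‖ - 12 * d)
  simp only [Finset.sum_sub_distrib, ← Finset.mul_sum] at lower
  simp only [Finset.sum_add_distrib, ← Finset.mul_sum] at upper interpolation
  set M₀ := ∑ A ∈ regGraphs N d, ‖centeredRow d A i‖ ^ n
  set M₁ := ∑ A ∈ regGraphs N d, ‖centeredRow d A i‖ ^ (n + 1)
  set M₂ := ∑ A ∈ regGraphs N d, ‖centeredRow d A i‖ ^ (n + 2)
  have scaled :
      (d * N : ℝ) * (M₂ / 4) ≤ (d * N : ℝ) * (10 * (n + 1) * d ^ 2 * M₀ + 3 * d * M₁) := by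
    linarith
  have recursion : M₂ / 4 ≤ 10 * (n + 1) * d ^ 2 * M₀ + 3 * d * M₁ :=
    le_of_mul_le_mul_left scaled (by positivity)
  have n_term : 0 ≤ n * (d : ℝ) ^ 2 * M₀ := by positivity
  linarith

theorem sum_norm_centeredRow_pow_le (hd : 1 ≤ d) (hdN : 2 * d ≤ N) (hN : 5 ≤ N) (i : Fin N)
    (p : ℕ) :
    ∑ A ∈ regGraphs N d, ‖centeredRow d A i‖ ^ (2 * p) ≤
      448 ^ p * p.factorial * d ^ (2 * p) * (regGraphs N d).card := by
  induction p with
  | zero => simp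
  | succ p ih =>
    calc ∑ A ∈ regGraphs N d, ‖centeredRow d A i‖ ^ (2 * p + 2)
        ≤ 224 * (↑(2 * p) + 1) * d ^ 2 *
            ∑ A ∈ regGraphs N d, ‖centeredRow d A i‖ ^ (2 * p) :=
          sum_norm_centeredRow_pow_add_two_le hd hdN hN i (2 * p)
      _ ≤ 448 * (p + 1) * d ^ 2 *
            (448 ^ p * p.factorial * d ^ (2 * p) * (regGraphs N d).card) := by
          gcongr ?_ * (d : ℝ) ^ 2 * ?_
          push_cast
          linarith
      _ = 448 ^ (p + 1) * (p + 1).factorial * d ^ (2 * p + 2) * (regGraphs N d).card := by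
          rw [Nat.factorial_succ]
          push_cast
          ring

theorem Ereg_norm_centeredRow_pow_le (hd : 1 ≤ d) (hdN : 2 * d ≤ N) (hN : 5 ≤ N) (i : Fin N)
    (p : ℕ) :
    Ereg N d (fun A ↦ ‖centeredRow d A i‖ ^ (2 * p)) ≤ 448 ^ p * p.factorial * d ^ (2 * p) := by
  rw [Ereg_eq_sum_div]
  exact div_le_of_le_mul₀ (by positivity) (by positivity)
    (sum_norm_centeredRow_pow_le hd hdN hN i p)

theorem PrReg_le_sum_abs_pow_add_two_sub_le (hd : 1 ≤ d) (hdN : 2 * d ≤ N) (hN : 5 ≤ N)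
    (i : Fin N) (n p : ℕ) {x : ℝ} (hx : 0 < x) :
    PrReg N d (fun A ↦ x * ((d : ℝ) ^ (n + 1) * √N) ≤
        ∑ j, |(A ^ (n + 2)) i j - (d : ℝ) ^ (n + 2) / N|) ≤
      448 ^ p * p.factorial / x ^ (2 * p) := by
  have d_pow_pos (j : ℕ) : (0 : ℝ) < d ^ j := pow_pos (mod_cast hd) j
  have sqrt_pos : 0 < √(N : ℝ) := Real.sqrt_pos.2 (mod_cast i.pos)
  set E : Matrix (Fin N) (Fin N) ℝ → Prop := fun A ↦ x * ((d : ℝ) ^ (n + 1) * √N) ≤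
    ∑ j, |(A ^ (n + 2)) i j - (d : ℝ) ^ (n + 2) / N|
  have norm_large (A) (h : IsAdjMat N d A) (hA : E A) : x * d ≤ ‖centeredRow d A i‖ := by
    refine le_of_mul_le_mul_left ?_ (mul_pos (d_pow_pos n) sqrt_pos)
    linear_combination hA.trans (h.sum_abs_pow_add_two_sub_le i n)
  have markov : PrReg N d E * (x * d) ^ (2 * p) ≤ 448 ^ p * p.factorial * d ^ (2 * p) :=
    (PrReg_mul_le_Ereg (fun A _ ↦ by positivity) fun A h hA ↦
      pow_le_pow_left₀ (by positivity) (norm_large A h hA) _).trans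
      (Ereg_norm_centeredRow_pow_le hd hdN hN i p)
  rw [le_div_iff₀ (by positivity)]
  refine le_of_mul_le_mul_right ?_ (d_pow_pos (2 * p))
  rwa [mul_assoc, ← mul_pow]

end RegularGraphs

theorem exists_eventually_div_rpow_pow_le (K : ℕ → ℝ) {ε : ℝ} (hε : 0 < ε) (D : ℝ) :
    ∃ p : ℕ, ∀ᶠ N : ℕ in atTop, K p / ((N : ℝ) ^ ε) ^ (2 * p) ≤ (N : ℝ) ^ (-D) := by
  obtain ⟨p, hp⟩ := exists_nat_ge ((D + 1) / (2 * ε))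
  have hp' : 1 + D ≤ ε * ↑(2 * p) := by
    rw [div_le_iff₀ (by positivity)] at hp
    push_cast
    linarith
  refine ⟨p, ?_⟩
  filter_upwards [eventually_ge_atTop 1, eventually_ge_atTop ⌈K p⌉₊] with N hN hKN
  have hN' : (1 : ℝ) ≤ N := mod_cast hN
  have hN0 : (0 : ℝ) < N := zero_lt_one.trans_le hN'
  rw [← Real.rpow_natCast, ← Real.rpow_mul hN0.le, div_le_iff₀ (by positivity),
    ← Real.rpow_add hN0]
  calc K p ≤ (N : ℝ) ^ (1 : ℝ) := by rw [Real.rpow_one]; exact Nat.ceil_le.1 hKN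
    _ ≤ (N : ℝ) ^ (-D + ε * ↑(2 * p)) := Real.rpow_le_rpow_of_exponent_le hN' (by linarith)

/-- Large deviation estimate for the rows of powers of `𝒜`. -/
theorem power_row_large_deviation
    (r : ℕ) (hr : 2 ≤ r) (ε D : ℝ) (hε : 0 < ε) (hD : 0 < D) :
    ∃ N₀ : ℕ, ∀ N, N₀ ≤ N → ∀ d : ℕ, 1 ≤ d → 2 * d ≤ N → Even (d * N) → ∀ i : Fin N,
      PrReg N d (fun A =>
        (N : ℝ) ^ ε * ((d : ℝ) ^ (r - 1) * Real.sqrt N) ≤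
          ∑ j, |(A ^ r) i j - (d : ℝ) ^ r / (N : ℝ)|) ≤
        (N : ℝ) ^ (-D) := by
  obtain ⟨n, rfl⟩ := Nat.exists_eq_add_of_le' hr
  obtain ⟨p, hp⟩ := exists_eventually_div_rpow_pow_le (fun p ↦ 448 ^ p * p.factorial) hε D
  obtain ⟨N₀, hN₀⟩ := eventually_atTop.1 (hp.and (eventually_ge_atTop 5))
  refine ⟨N₀, fun N hN d hd hdN _ i ↦ ?_⟩
  obtain ⟨decay, hN5⟩ := hN₀ N hN
  have hx : 0 < (N : ℝ) ^ ε := Real.rpow_pos_of_pos (mod_cast i.pos) ε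
  exact (PrReg_le_sum_abs_pow_add_two_sub_le hd hdN hN5 i n p hx).trans decay

end
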